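/- arXiv:1603.01078 — 3 statements merged into one kernel-verified Lean document; each statement's English description precedes it below -/
import Mathlib

section
/- Let S be a numerical semigroup minimally generated by n_1 < … < n_d, let k be a field, let s ∈ S and let c be a factorization of s. Then there exists a minimal generating set E of the toric ideal I_S consisting of binomials such that every binomial x^a − x^b ∈ E with s(a) ∉ AP(S,s) has one of its two monomials divisible by x^c. -/
open scoped BigOperators

/-- The value `Σ aᵢ nᵢ` of a tuple of coefficients `a` w.r.t. the generators `n`. -/
def sval {d : ℕ} (n : Fin d → ℕ) (a : Fin d → ℕ) : ℕ := ∑ i, a i * n i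

/-- The total length `Σ aᵢ` of a factorization. -/
def tlen {d : ℕ} (a : Fin d → ℕ) : ℕ := ∑ i, a i

/-- The submonoid of `ℕ` generated by `n`. -/
def gen {d : ℕ} (n : Fin d → ℕ) : Set ℕ := {s : ℕ | ∃ a : Fin d → ℕ, s = sval n a}

/-- The Apéry set of the semigroup generated by `n` with respect to `s`:
elements `x` of the semigroup such that `x - s` is not in the semigroup. -/
def Apery {d : ℕ} (n : Fin d → ℕ) (s : ℕ) : Set ℕ :=
  {x : ℕ | x ∈ gen n ∧ ¬ ∃ y ∈ gen n, x = s + y}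

/-- A subset `T` is homogeneous if every nonzero element of `T` has all its
factorizations of the same length. -/
def HomogSet {d : ℕ} (n : Fin d → ℕ) (T : Set ℕ) : Prop :=
  ∀ t ∈ T, t ≠ 0 → ∀ a b : Fin d → ℕ, sval n a = t → sval n b = t → tlen a = tlen b

/-- The order of `s`: the maximal length of a factorization of `s`. -/
noncomputable def ordS {d : ℕ} (n : Fin d → ℕ) (s : ℕ) : ℕ :=
  sSup {l : ℕ | ∃ a : Fin d → ℕ, sval n a = s ∧ tlen a = l}

/-- The torsion set of the semigroup generated by `n`, with respect to the
generator of index `i0` (the smallest generator). -/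
noncomputable def Torsion {d : ℕ} (n : Fin d → ℕ) (i0 : Fin d) : Set ℕ :=
  {s : ℕ | s ∈ gen n ∧ ∃ c : ℕ, 0 < c ∧ ordS n s + c < ordS n (s + c * n i0)}

/-- `n` is a minimal system of generators: any expression of a generator as a
nonnegative combination of the generators has total coefficient sum one. -/
def MinGen {d : ℕ} (n : Fin d → ℕ) : Prop :=
  ∀ r : Fin d, ∀ a : Fin d → ℕ, n r = sval n a → tlen a = 1

/-- `n` generates a numerical semigroup (cofinite in `ℕ`). -/
def IsNumerical {d : ℕ} (n : Fin d → ℕ) : Prop := {x : ℕ | x ∉ gen n}.Finite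

/-- The monomial `x^a = Π xᵢ^{aᵢ}`. -/
noncomputable def monom (k : Type*) [CommRing k] {d : ℕ} (a : Fin d → ℕ) :
    MvPolynomial (Fin d) k :=
  ∏ i, (MvPolynomial.X i : MvPolynomial (Fin d) k) ^ a i

/-- The toric ideal `I_S`: kernel of `k[x₁,…,x_d] → k[t]`, `xᵢ ↦ t^{nᵢ}`. -/
noncomputable def toricIdeal (k : Type*) [CommRing k] {d : ℕ} (n : Fin d → ℕ) :
    Ideal (MvPolynomial (Fin d) k) :=
  RingHom.ker (MvPolynomial.aeval (R := k)
    (fun i => (Polynomial.X : Polynomial k) ^ n i)).toRingHom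

/-- `E` is a minimal generating set of the ideal `I`: it spans `I` and no
proper subset spans `I`. -/
def IsMinGenSet {R : Type*} [CommRing R] (I : Ideal R) (E : Set R) : Prop :=
  Ideal.span E = I ∧ ∀ E' : Set R, E' ⊂ E → Ideal.span E' ≠ I

/-- Membership of an integer in the semigroup generated by `n`. -/
def memZ {d : ℕ} (n : Fin d → ℕ) (z : ℤ) : Prop := ∃ x ∈ gen n, (x : ℤ) = z

/-- A numerical semigroup with Frobenius number `F = max (ℤ ∖ S)` is symmetric
if for every integer `z`, `z ∈ S ↔ F - z ∉ S`. -/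
def IsSymmetric {d : ℕ} (n : Fin d → ℕ) : Prop :=
  ∃ F : ℤ, ¬ memZ n F ∧ (∀ z : ℤ, F < z → memZ n z) ∧
    ∀ z : ℤ, memZ n z ↔ ¬ memZ n (F - z)

/-- A numerical semigroup with Frobenius number `F = max (ℤ ∖ S)` is
pseudo-symmetric if `F` is even and for every integer `z`,
`z ∈ S ↔ (z ≠ F/2 ∧ F - z ∉ S)`. -/
def IsPseudoSymmetric {d : ℕ} (n : Fin d → ℕ) : Prop :=
  ∃ F : ℤ, ¬ memZ n F ∧ (∀ z : ℤ, F < z → memZ n z) ∧ F % 2 = 0 ∧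
    ∀ z : ℤ, memZ n z ↔ (z ≠ F / 2 ∧ ¬ memZ n (F - z))

/-- The generators `q·m₁,…,q·m_d, p·n₁,…,p·n_e` of the gluing of two numerical
semigroups. -/
def glueGen {d e : ℕ} (mg : Fin d → ℕ) (ng : Fin e → ℕ) (p q : ℕ) :
    Fin (d + e) → ℕ :=
  Fin.append (fun i => q * mg i) (fun i => p * ng i)

/-!
Choose for every `m ∈ S` a factorization `r m`, with `r m ≥ c` as soon as `m ∉ AP(S, s)`; this is
possible because `m - s` then has a factorization `e`, and `c + e` will do. Let `φ : k[x] → k[t]` be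
the parametrization and `ψ` the linear map with `ψ (t ^ m) = x ^ r m`. Every `f` is congruent to
`ψ (φ f)` modulo the binomials `x ^ a - x ^ r (s(a))`, so these already generate `I_S = ker φ`, and
by noetherianity finitely many of them form a minimal generating set. A nonzero binomial determines
its two monomials, so the divisibility by `x ^ c` does not depend on how an element of that set is
written.
-/

section IsMinGenSet

variable {R : Type*} [CommRing R]

theorem exists_isMinGenSet_subset {I : Ideal R} {G : Set R} (hI : I.FG) (hG : Ideal.span G = I) :
    ∃ E ⊆ G, IsMinGenSet I E := by
  subst hG
  obtain ⟨T, hTG, hT⟩ := (Submodule.fg_span_iff_fg_span_finset_subset G).1 hI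
  obtain ⟨E, hET, hE⟩ := exists_minimal_le_of_wellFoundedLT
    (fun F : Finset R => Ideal.span (F : Set R) = Ideal.span G) T hT.symm
  refine ⟨E, (Finset.coe_subset.2 hET).trans hTG, hE.prop, fun E' hE' hspan => ?_⟩
  lift E' to Finset R using E.finite_toSet.subset hE'.subset
  exact hE.not_prop_of_lt (Finset.coe_ssubset.1 hE') hspan

theorem IsMinGenSet.zero_notMem {I : Ideal R} {E : Set R} (hE : IsMinGenSet I E) :
    (0 : R) ∉ E := fun h0 =>
  hE.2 (E \ {0}) (Set.sdiff_singleton_ssubset.2 h0) (Ideal.span_sdiff_singleton_zero.trans hE.1)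

end IsMinGenSet

section Factorizations

variable {d : ℕ}

theorem sval_add (n a b : Fin d → ℕ) : sval n (a + b) = sval n a + sval n b := by
  simp [sval, add_mul, Finset.sum_add_distrib]

theorem exists_factorization_ge_of_notMem_Apery {n : Fin d → ℕ} (c : Fin d → ℕ) {m : ℕ}
    (hm : m ∈ gen n) :
    ∃ a, sval n a = m ∧ (m ∉ Apery n (sval n c) → c ≤ a) := by
  by_cases hA : m ∈ Apery n (sval n c)
  · obtain ⟨a, rfl⟩ := hm
    exact ⟨a, rfl, absurd hA⟩
  · obtain ⟨_, ⟨e, rfl⟩, rfl⟩ : ∃ y ∈ gen n, m = sval n c + y := by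
      by_contra h
      exact hA ⟨hm, h⟩
    exact ⟨c + e, sval_add n c e, fun _ => le_self_add⟩

end Factorizations

section Monomials

variable (k : Type*) [CommRing k] {d : ℕ}

theorem monom_eq_monomial (a : Fin d → ℕ) :
    monom k a = MvPolynomial.monomial (Finsupp.equivFunOnFinite.symm a) 1 := by
  rw [MvPolynomial.monomial_eq, Finsupp.prod_fintype _ _ fun _ => pow_zero _]
  simp [monom]

theorem monom_dvd_monom {a b : Fin d → ℕ} (h : a ≤ b) : monom k a ∣ monom k b :=
  Finset.prod_dvd_prod_of_dvd _ _ fun i _ => pow_dvd_pow _ (h i)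

variable {k}

theorem monom_sub_monom_inj [Nontrivial k] {a b a' b' : Fin d → ℕ} (hne : a ≠ b) :
    monom k a - monom k b = monom k a' - monom k b' ↔
      (a = a' ∧ b = b') ∨ ((1 : k) + 1 = 0 ∧ a = b' ∧ b = a') := by
  simp only [sub_eq_sub_iff_add_eq_add, monom_eq_monomial, ← MvPolynomial.single_eq_monomial,
    AddMonoidAlgebra.single_add_single_inj one_ne_zero one_ne_zero, EmbeddingLike.apply_eq_iff_eq,
    hne, false_and, and_false, false_or]
  rw [eq_comm (a := b'), eq_comm (a := a') (b := b)]

end Monomials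

section ToricIdeal

variable (k : Type*) [CommRing k] {d : ℕ}

/-- The parametrization `k[x₁,…,x_d] → k[t]`, `xᵢ ↦ t^{nᵢ}`, whose kernel is `I_S`. -/
noncomputable def toricMap (n : Fin d → ℕ) : MvPolynomial (Fin d) k →ₐ[k] Polynomial k :=
  MvPolynomial.aeval fun i => Polynomial.X ^ n i

/-- The linear map `k[t] → k[x₁,…,x_d]` sending `t^m` to `x^{r m}`, where `r m` stands for a chosen
factorization of `m`. -/
noncomputable def monomLift (r : ℕ → Fin d → ℕ) : Polynomial k →ₗ[k] MvPolynomial (Fin d) k :=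
  (Polynomial.basisMonomials k).constr k fun m => monom k (r m)

variable {k}

theorem mem_toricIdeal_iff {n : Fin d → ℕ} {f : MvPolynomial (Fin d) k} :
    f ∈ toricIdeal k n ↔ toricMap k n f = 0 :=
  Iff.rfl

theorem toricMap_monom (n a : Fin d → ℕ) :
    toricMap k n (monom k a) = Polynomial.monomial (sval n a) 1 := by
  simp only [toricMap, monom, sval, map_prod, map_pow, MvPolynomial.aeval_X, ← pow_mul',
    Finset.prod_pow_eq_pow_sum, ← Polynomial.X_pow_eq_monomial]

theorem monom_sub_monom_mem_toricIdeal {n a b : Fin d → ℕ} (h : sval n a = sval n b) :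
    monom k a - monom k b ∈ toricIdeal k n := by
  rw [mem_toricIdeal_iff, map_sub, toricMap_monom, toricMap_monom, h, sub_self]

theorem monomLift_monomial_one (r : ℕ → Fin d → ℕ) (m : ℕ) :
    monomLift k r (Polynomial.monomial m 1) = monom k (r m) := by
  simpa only [monomLift, Polynomial.coe_basisMonomials] using
    (Polynomial.basisMonomials k).constr_basis k (fun m => monom k (r m)) m

theorem sub_monomLift_toricMap_mem_span (n : Fin d → ℕ) (r : ℕ → Fin d → ℕ)
    (f : MvPolynomial (Fin d) k) :
    f - monomLift k r (toricMap k n f) ∈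
      Ideal.span (Set.range fun a => monom k a - monom k (r (sval n a))) := by
  induction f using MvPolynomial.induction_on' with
  | monomial u t =>
    have hu : MvPolynomial.monomial u t = t • monom k u := by
      rw [monom_eq_monomial, MvPolynomial.smul_monomial, smul_eq_mul, mul_one,
        Finsupp.equivFunOnFinite_symm_coe]
    rw [hu, map_smul, map_smul, toricMap_monom, monomLift_monomial_one, ← smul_sub]
    exact Submodule.smul_of_tower_mem _ t (Ideal.subset_span ⟨u, rfl⟩)
  | add p q hp hq =>
    rw [map_add, map_add, add_sub_add_comm]
    exact Ideal.add_mem _ hp hq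

theorem span_range_monom_sub_monom_eq_toricIdeal {n : Fin d → ℕ} {r : ℕ → Fin d → ℕ}
    (hr : ∀ m ∈ gen n, sval n (r m) = m) :
    Ideal.span (Set.range fun a => monom k a - monom k (r (sval n a))) = toricIdeal k n := by
  apply le_antisymm
  · rw [Ideal.span_le, Set.range_subset_iff]
    exact fun a => monom_sub_monom_mem_toricIdeal (hr _ ⟨a, rfl⟩).symm
  · intro f hf
    simpa only [mem_toricIdeal_iff.1 hf, map_zero, sub_zero] using
      sub_monomLift_toricMap_mem_span n r f

end ToricIdeal

theorem statement1_general (k : Type*) [CommRing k] [IsNoetherianRing k] [Nontrivial k] {d : ℕ}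
    (n c : Fin d → ℕ) :
    ∃ E : Set (MvPolynomial (Fin d) k),
      IsMinGenSet (toricIdeal k n) E ∧
      (∀ f ∈ E, ∃ a b : Fin d → ℕ, f = monom k a - monom k b) ∧
      (∀ a b : Fin d → ℕ, monom k a - monom k b ∈ E → sval n a ∉ Apery n (sval n c) →
        (monom k c ∣ monom k a ∨ monom k c ∣ monom k b)) := by
  choose! r hr using fun m (hm : m ∈ gen n) => exists_factorization_ge_of_notMem_Apery c hm
  obtain ⟨E, hEG, hE⟩ := exists_isMinGenSet_subset (IsNoetherian.noetherian (toricIdeal k n))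
    (span_range_monom_sub_monom_eq_toricIdeal fun m hm => (hr m hm).1)
  refine ⟨E, hE, fun f hf => ?_, fun a b hab hA => ?_⟩
  · obtain ⟨a, rfl⟩ := hEG hf
    exact ⟨a, _, rfl⟩
  · have hne : a ≠ b := by
      rintro rfl
      exact hE.zero_notMem (sub_self (monom k a) ▸ hab)
    obtain ⟨a', ha'⟩ := hEG hab
    obtain ⟨hsval, hle⟩ := hr (sval n a') ⟨a', rfl⟩
    rcases (monom_sub_monom_inj hne).1 ha'.symm with ⟨rfl, rfl⟩ | ⟨-, rfl, rfl⟩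
    · exact .inr (monom_dvd_monom k (hle hA))
    · exact .inl (monom_dvd_monom k (hle (hsval ▸ hA)))

/-- given a factorization `c` of `s`, there is a minimal binomial
generating set of `I_S` in which every binomial `x^a - x^b` with
`s(a) ∉ AP(S,s)` has one of its monomials divisible by `x^c`. -/
theorem statement1 {d : ℕ} (hd : 0 < d) (k : Type*) [Field k]
    (n : Fin d → ℕ) (hmono : StrictMono n) (hpos : 0 < n ⟨0, hd⟩)
    (hnum : IsNumerical n) (hmin : MinGen n)
    (s : ℕ) (hs : s ∈ gen n) (c : Fin d → ℕ) (hc : sval n c = s) :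
    ∃ E : Set (MvPolynomial (Fin d) k),
      IsMinGenSet (toricIdeal k n) E ∧
      (∀ f ∈ E, ∃ a b : Fin d → ℕ, f = monom k a - monom k b) ∧
      (∀ a b : Fin d → ℕ, monom k a - monom k b ∈ E → sval n a ∉ Apery n s →
        (monom k c ∣ monom k a ∨ monom k c ∣ monom k b)) := by
  subst hc
  exact statement1_general k n c
end

section
/- Let b > a > 3 be coprime integers and let H = ⟨a, b, ab − a − b⟩ be the Frobenius semigroup, minimally generated by a, b and ab − a − b. Then AP(H,a) = {0, b, 2b, …, (a−2)b, ab − a − b}, this set is homogeneous (so H is homogeneous), and the torsion set of H is T(H) = {ab − a − b}; in particular the tangent cone of H is not Cohen–Macaulay. -/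
open scoped BigOperators

/-!
Let `f = ab - a - b`. Since `f` is the Frobenius number of `⟨a, b⟩`, the semigroup `H = ⟨a, b, f⟩`
is just `⟨a, b⟩ ∪ {f}`, which gives the Apéry set. The relations `ab = ba`, `b + f = (b - 1)a` and
`2f = (b - 2)a + (a - 2)b` introduce the generator `a` into a factorization without shortening it.
The only other way to introduce `a` is `(a - 1)b = a + f`, which shortens as soon as `a > 3`: hence
adding `a` to an element of `H` raises the order by more than one only at `f`.
-/

section GeneralGenerators

variable {d : ℕ} {n : Fin d → ℕ} {s : ℕ}

theorem tlen_le_sval (hn : ∀ i, 0 < n i) (c : Fin d → ℕ) : tlen c ≤ sval n c :=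
  Finset.sum_le_sum fun i _ ↦ Nat.le_mul_of_pos_right (c i) (hn i)

theorem tlen_le_ordS (hn : ∀ i, 0 < n i) (c : Fin d → ℕ) : tlen c ≤ ordS n (sval n c) := by
  refine le_csSup ⟨sval n c, ?_⟩ ⟨c, rfl, rfl⟩
  rintro _ ⟨c', hc', rfl⟩
  exact (tlen_le_sval hn c').trans_eq hc'

theorem ordS_le {m : ℕ} (h : ∀ c, sval n c = s → tlen c ≤ m) : ordS n s ≤ m :=
  csSup_le' <| by rintro _ ⟨c, hc, rfl⟩; exact h c hc

theorem notMem_torsion_of_ordS_add_le {i : Fin d}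
    (h : ∀ k, ordS n (s + k * n i + n i) ≤ ordS n (s + k * n i) + 1) : s ∉ Torsion n i := by
  rintro ⟨-, c, -, hlt⟩
  have hle (k : ℕ) : ordS n (s + k * n i) ≤ ordS n s + k := by
    induction k with
    | zero => simp
    | succ k ih =>
      rw [Nat.succ_mul, ← add_assoc, ← add_assoc]
      exact (h k).trans (Nat.add_le_add_right ih 1)
  exact (hle c).not_gt hlt

theorem add_notMem_apery {w : ℕ} (hw : w ∈ gen n) : s + w ∉ Apery n s :=
  fun h ↦ h.2 ⟨w, hw, rfl⟩

end GeneralGenerators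

section ThreeGenerators

variable {a b f s : ℕ}

theorem sval_three (c : Fin 3 → ℕ) : sval ![a, b, f] c = c 0 * a + c 1 * b + c 2 * f := by
  simp [sval, Fin.sum_univ_three]

theorem tlen_three (c : Fin 3 → ℕ) : tlen c = c 0 + c 1 + c 2 :=
  Fin.sum_univ_three c

theorem mem_gen_three : s ∈ gen ![a, b, f] ↔ ∃ x y z, x * a + y * b + z * f = s := by
  constructor
  · rintro ⟨c, rfl⟩
    exact ⟨c 0, c 1, c 2, (sval_three c).symm⟩
  · rintro ⟨x, y, z, rfl⟩
    exact ⟨![x, y, z], (sval_three ![x, y, z]).symm⟩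

theorem succ_mul_add_notMem_apery (x y z : ℕ) :
    (x + 1) * a + y * b + z * f ∉ Apery ![a, b, f] a := by
  rw [show (x + 1) * a + y * b + z * f = a + (x * a + y * b + z * f) by ring]
  exact add_notMem_apery (mem_gen_three.2 ⟨x, y, z, rfl⟩)

theorem add_add_le_ordS_three (ha : 0 < a) (hb : 0 < b) (hf : 0 < f) {x y z : ℕ}
    (h : x * a + y * b + z * f = s) : x + y + z ≤ ordS ![a, b, f] s := by
  have hpos : ∀ i, 0 < ![a, b, f] i := by simp [Fin.forall_fin_succ, ha, hb, hf]
  simpa [sval_three, tlen_three, h] using tlen_le_ordS hpos ![x, y, z]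

theorem ordS_three_le {m : ℕ} (h : ∀ x y z, x * a + y * b + z * f = s → x + y + z ≤ m) :
    ordS ![a, b, f] s ≤ m :=
  ordS_le fun c hc ↦ tlen_three c ▸ h _ _ _ ((sval_three c).symm.trans hc)

end ThreeGenerators

section Frobenius

variable {a b f s : ℕ}

theorem one_lt_and_one_lt_of_add_add_eq_mul (hcop : a.Coprime b) (hf : f + a + b = a * b) :
    1 < a ∧ 1 < b := by
  rcases a with _ | _ | a <;> rcases b with _ | _ | b <;> simp_all
  omega

theorem frobeniusNumber_of_add_add_eq_mul (hcop : a.Coprime b) (hf : f + a + b = a * b) :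
    FrobeniusNumber f {a, b} := by
  obtain ⟨ha, hb⟩ := one_lt_and_one_lt_of_add_add_eq_mul hcop hf
  have hfab : f = a * b - a - b := by omega
  exact hfab ▸ frobeniusNumber_pair hcop ha hb

theorem mul_add_mul_ne_of_frobeniusNumber (hF : FrobeniusNumber f {a, b}) (p q : ℕ) :
    p * a + q * b ≠ f :=
  fun h ↦ hF.1 ((AddSubmonoid.mem_closure_pair a b f).2 ⟨p, q, h⟩)

theorem pos_of_frobeniusNumber (hF : FrobeniusNumber f {a, b}) : 0 < f :=
  Nat.pos_of_ne_zero fun h ↦ mul_add_mul_ne_of_frobeniusNumber hF 0 0 (by simp [h])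

theorem mem_gen_iff_of_frobeniusNumber (hF : FrobeniusNumber f {a, b}) :
    s ∈ gen ![a, b, f] ↔ (∃ p q, p * a + q * b = s) ∨ s = f := by
  constructor
  · intro hs
    obtain ⟨x, y, z, rfl⟩ := mem_gen_three.1 hs
    rcases le_or_gt (x * a + y * b + z * f) f with hle | hgt
    · rcases z with _ | z
      · exact Or.inl ⟨x, y, by simp⟩
      · exact Or.inr (hle.antisymm (by rw [Nat.succ_mul]; omega))
    · exact Or.inl ((AddSubmonoid.mem_closure_pair a b _).1 ((frobeniusNumber_iff.1 hF).2 _ hgt))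
  · rintro (⟨p, q, rfl⟩ | rfl)
    · exact mem_gen_three.2 ⟨p, q, 0, by simp⟩
    · exact mem_gen_three.2 ⟨0, 0, 1, by simp⟩

theorem eq_zero_of_mul_add_mul_eq_mul (hcop : a.Coprime b) (hb : 0 < b) {i p q : ℕ} (hi : i < a)
    (h : p * a + q * b = i * b) : p = 0 := by
  have hqi : q ≤ i := Nat.le_of_mul_le_mul_right (by omega) hb
  obtain ⟨k, rfl⟩ := Nat.exists_eq_add_of_le hqi
  have hpk : p * a = k * b := by linarith
  have hk : k = 0 :=
    Nat.eq_zero_of_dvd_of_lt (hcop.dvd_of_dvd_mul_right ⟨p, by rw [← hpk, mul_comm]⟩) (by omega)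
  simpa [hk, Nat.ne_zero_of_lt hi] using hpk

theorem mul_mem_apery (hcop : a.Coprime b) (hf : f + a + b = a * b) {i : ℕ} (hi : i + 2 ≤ a) :
    i * b ∈ Apery ![a, b, f] a := by
  have hF := frobeniusNumber_of_add_add_eq_mul hcop hf
  have hb : 0 < b := one_pos.trans (one_lt_and_one_lt_of_add_add_eq_mul hcop hf).2
  refine ⟨mem_gen_three.2 ⟨0, i, 0, by simp⟩, ?_⟩
  rintro ⟨w, hw, hiw⟩
  rcases (mem_gen_iff_of_frobeniusNumber hF).1 hw with ⟨p, q, rfl⟩ | rfl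
  · have hpq : (p + 1) * a + q * b = i * b := by linarith
    exact p.succ_ne_zero (eq_zero_of_mul_add_mul_eq_mul hcop hb (by omega) hpq)
  · have hia : (i + 1) * b = a * b := by linarith
    have := Nat.eq_of_mul_eq_mul_right hb hia
    omega

theorem frobeniusNumber_mem_apery (ha : 0 < a) (hF : FrobeniusNumber f {a, b}) :
    f ∈ Apery ![a, b, f] a := by
  refine ⟨(mem_gen_iff_of_frobeniusNumber hF).2 (Or.inr rfl), ?_⟩
  rintro ⟨w, hw, hfw⟩
  rcases (mem_gen_iff_of_frobeniusNumber hF).1 hw with ⟨p, q, rfl⟩ | rfl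
  · exact mul_add_mul_ne_of_frobeniusNumber hF (p + 1) q (by linarith)
  · omega

theorem apery_eq_of_add_add_eq_mul (hcop : a.Coprime b) (hf : f + a + b = a * b) :
    Apery ![a, b, f] a = {x | (∃ i, i ≤ a - 2 ∧ x = i * b) ∨ x = f} := by
  have ha : 1 < a := (one_lt_and_one_lt_of_add_add_eq_mul hcop hf).1
  have hF := frobeniusNumber_of_add_add_eq_mul hcop hf
  ext x
  constructor
  · intro hx
    rcases (mem_gen_iff_of_frobeniusNumber hF).1 hx.1 with ⟨_ | p, q, rfl⟩ | rfl
    · refine Or.inl ⟨q, ?_, by simp⟩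
      by_contra! hq
      obtain ⟨k, hk⟩ : ∃ k, q + 1 = a + k := Nat.exists_eq_add_of_le (by omega)
      have hrel : 0 * a + q * b = (0 + 1) * a + k * b + 1 * f := by
        linarith [congrArg (· * b) hk, add_mul a k b, add_mul q 1 b]
      exact succ_mul_add_notMem_apery 0 k 1 (hrel ▸ hx)
    · exact absurd (by simpa using hx) (succ_mul_add_notMem_apery (f := f) p q 0)
    · exact Or.inr rfl
  · rintro (⟨i, hi, rfl⟩ | rfl)
    · exact mul_mem_apery hcop hf (by omega)
    · exact frobeniusNumber_mem_apery (by omega) hF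

theorem exists_succ_mul_add_eq_and_le (ha : 2 < a) (hab : a < b) (hf : f + a + b = a * b)
    (y z : ℕ) :
    (z = 0 ∧ y < a) ∨ (z = 1 ∧ y = 0) ∨
      ∃ x' y' z', (x' + 1) * a + y' * b + z' * f = y * b + z * f ∧ y + z ≤ x' + 1 + y' + z' := by
  obtain ⟨a, rfl⟩ := Nat.exists_eq_add_of_lt ha
  obtain ⟨b, rfl⟩ := Nat.exists_eq_add_of_lt hab
  rcases z with _ | _ | z
  · rcases lt_or_ge y (2 + a + 1) with hy | hy
    · exact Or.inl ⟨rfl, hy⟩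
    · obtain ⟨k, rfl⟩ := Nat.exists_eq_add_of_le hy
      exact Or.inr (Or.inr ⟨2 + a + b + 1, k, 0, by ring, by omega⟩)
  · rcases y with _ | y
    · exact Or.inr (Or.inl ⟨rfl, rfl⟩)
    · exact Or.inr (Or.inr ⟨2 + a + b, y, 0, by linarith, by omega⟩)
  · exact Or.inr (Or.inr ⟨1 + a + b, y + (a + 1), z, by linarith, by omega⟩)

theorem factorization_of_mem_apery (ha : 2 < a) (hab : a < b) (hf : f + a + b = a * b)
    {x y z : ℕ} (h : x * a + y * b + z * f ∈ Apery ![a, b, f] a) :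
    x = 0 ∧ (z = 0 ∨ z = 1 ∧ y = 0) := by
  rcases x with _ | x
  · rcases exists_succ_mul_add_eq_and_le ha hab hf y z with ⟨hz, -⟩ | hyz | ⟨x', y', z', heq, -⟩
    · exact ⟨rfl, Or.inl hz⟩
    · exact ⟨rfl, Or.inr hyz⟩
    · rw [zero_mul, zero_add, ← heq] at h
      exact absurd h (succ_mul_add_notMem_apery x' y' z')
  · exact absurd h (succ_mul_add_notMem_apery x y z)

theorem homogSet_apery (ha : 2 < a) (hab : a < b) (hcop : a.Coprime b) (hf : f + a + b = a * b) :
    HomogSet ![a, b, f] (Apery ![a, b, f] a) := by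
  have hfb (y : ℕ) : y * b ≠ f := by
    simpa using mul_add_mul_ne_of_frobeniusNumber (frobeniusNumber_of_add_add_eq_mul hcop hf) 0 y
  rintro t ht - c c' hc hc'
  rw [sval_three] at hc hc'
  obtain ⟨hx, hyz⟩ := factorization_of_mem_apery ha hab hf (hc ▸ ht)
  obtain ⟨hx', hyz'⟩ := factorization_of_mem_apery ha hab hf (hc' ▸ ht)
  have hcc' : c 1 * b + c 2 * f = c' 1 * b + c' 2 * f := by simpa [hx, hx'] using hc.trans hc'.symm
  rw [tlen_three, tlen_three, hx, hx']
  rcases hyz with hz | ⟨hz, hy⟩ <;> rcases hyz' with hz' | ⟨hz', hy'⟩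
  · simp only [hz, hz', zero_mul, add_zero] at hcc' ⊢
    rw [Nat.eq_of_mul_eq_mul_right (by omega) hcc']
  · exact absurd (by simpa [hz, hz', hy'] using hcc') (hfb (c 1))
  · exact absurd (by simpa [hz, hz', hy] using hcc'.symm) (hfb (c' 1))
  · rw [hy, hz, hy', hz']

theorem ordS_add_le_add_one (ha : 2 < a) (hab : a < b) (hcop : a.Coprime b) (hf : f + a + b = a * b)
    (hs : s ∈ gen ![a, b, f]) (hsf : s ≠ f) : ordS ![a, b, f] (s + a) ≤ ordS ![a, b, f] s + 1 := by
  have hF := frobeniusNumber_of_add_add_eq_mul hcop hf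
  have hf0 : 0 < f := pos_of_frobeniusNumber hF
  have hsa : s + a ∉ Apery ![a, b, f] a := add_comm a s ▸ add_notMem_apery hs
  have le_ordS {x y z : ℕ} (h : (x + 1) * a + y * b + z * f = s + a) :
      x + 1 + y + z ≤ ordS ![a, b, f] s + 1 := by
    have := add_add_le_ordS_three (by omega) (by omega) hf0
      (show x * a + y * b + z * f = s by linarith)
    omega
  refine ordS_three_le fun x y z h ↦ ?_
  rcases x with _ | x
  · rw [zero_mul, zero_add] at h
    rcases exists_succ_mul_add_eq_and_le ha hab hf y z with
      ⟨rfl, hy⟩ | ⟨rfl, rfl⟩ | ⟨x', y', z', heq, hlen⟩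
    · rw [zero_mul, add_zero] at h
      obtain hy | rfl : y + 2 ≤ a ∨ a = y + 1 := by omega
      · exact absurd (h ▸ mul_mem_apery hcop hf hy) hsa
      · exact absurd (by linarith) hsf
    · exact absurd (by simpa [← h] using frobeniusNumber_mem_apery (by omega) hF) hsa
    · rw [zero_add]
      exact hlen.trans (le_ordS (heq.trans h))
  · exact le_ordS h

theorem torsion_subset (ha : 2 < a) (hab : a < b) (hcop : a.Coprime b) (hf : f + a + b = a * b) :
    Torsion ![a, b, f] 0 ⊆ {f} := by
  have hfA : f ∈ Apery ![a, b, f] a :=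
    frobeniusNumber_mem_apery (by omega) (frobeniusNumber_of_add_add_eq_mul hcop hf)
  intro s hs
  by_contra hsf
  obtain ⟨x, y, z, hxyz⟩ := mem_gen_three.1 hs.1
  have hmem (k : ℕ) : (x + k) * a + y * b + z * f = s + k * a := by rw [← hxyz]; ring
  refine notMem_torsion_of_ordS_add_le (fun k ↦ ?_) hs
  refine ordS_add_le_add_one ha hab hcop hf (mem_gen_three.2 ⟨x + k, y, z, hmem k⟩) fun hk ↦ ?_
  rcases k with _ | k
  · exact hsf (by simpa using hk)
  · have hxk : (x + k + 1) * a + y * b + z * f = f := (hmem (k + 1)).trans hk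
    apply succ_mul_add_notMem_apery (f := f) (x + k) y z
    rwa [hxk]

theorem ordS_le_one_of_frobeniusNumber (ha : 0 < a) (hb : 0 < b)
    (hF : FrobeniusNumber f {a, b}) : ordS ![a, b, f] f ≤ 1 := by
  refine ordS_three_le fun x y z h ↦ ?_
  rcases z with _ | z
  · exact absurd (by simpa using h) (mul_add_mul_ne_of_frobeniusNumber hF x y)
  · have h0 : x * a + y * b + z * f = 0 := by linarith
    have : (x = 0 ∧ y = 0) ∧ z = 0 := by
      simpa [ha.ne', hb.ne', (pos_of_frobeniusNumber hF).ne'] using h0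
    omega

theorem frobeniusNumber_mem_torsion (ha : 3 < a) (hcop : a.Coprime b) (hf : f + a + b = a * b) :
    f ∈ Torsion ![a, b, f] 0 := by
  have hF := frobeniusNumber_of_add_add_eq_mul hcop hf
  have hf0 : 0 < f := pos_of_frobeniusNumber hF
  have hb : 0 < b := one_pos.trans (one_lt_and_one_lt_of_add_add_eq_mul hcop hf).2
  refine ⟨(mem_gen_iff_of_frobeniusNumber hF).2 (Or.inr rfl), 1, one_pos, ?_⟩
  have hrel : 0 * a + (a - 1) * b + 0 * f = f + 1 * a := by
    rw [Nat.sub_mul]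
    omega
  calc ordS ![a, b, f] f + 1 ≤ 2 :=
        Nat.add_le_add_right (ordS_le_one_of_frobeniusNumber (by omega) hb hF) 1
    _ < 0 + (a - 1) + 0 := by omega
    _ ≤ ordS ![a, b, f] (f + 1 * a) := add_add_le_ordS_three (by omega) hb hf0 hrel

end Frobenius

/-- for the Frobenius semigroup `H = ⟨a, b, ab - a - b⟩` with
`b > a > 3` coprime: description of `AP(H,a)`, homogeneity of `H`, and
`T(H) = {ab - a - b} ≠ ∅` (so the tangent cone is not Cohen–Macaulay). -/
theorem statement5 (a b : ℕ) (ha : 3 < a) (hab : a < b) (hcop : Nat.Coprime a b)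
    (hmin : MinGen ![a, b, a * b - a - b]) :
    Apery ![a, b, a * b - a - b] a =
      {x : ℕ | (∃ i : ℕ, i ≤ a - 2 ∧ x = i * b) ∨ x = a * b - a - b} ∧
    HomogSet ![a, b, a * b - a - b] (Apery ![a, b, a * b - a - b] a) ∧
    Torsion ![a, b, a * b - a - b] 0 = {a * b - a - b} ∧
    Torsion ![a, b, a * b - a - b] 0 ≠ ∅ := by
  have hf : a * b - a - b + a + b = a * b := by
    have : a + b ≤ a * b := Nat.add_le_mul (by omega) (by omega)
    omega
  have hmem := frobeniusNumber_mem_torsion ha hcop hf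
  have hsub := torsion_subset (by omega) hab hcop hf
  exact ⟨apery_eq_of_add_add_eq_mul hcop hf, homogSet_apery (by omega) hab hcop hf,
    hsub.antisymm (Set.singleton_subset_iff.2 hmem), Set.nonempty_iff_ne_empty.1 ⟨_, hmem⟩⟩
end

section
/- Let S be a numerical semigroup minimally generated by three elements n_1 < n_2 < n_3. If S is not symmetric, then AP(S,n_i) is a homogeneous set for all i = 1,2,3; in particular S is homogeneous. -/
open scoped BigOperators

/-
Let `S = ⟨p, q, r⟩`, the generators being in any order. If an element of `AP(S, p)` has two
factorizations, then neither involves `p`, and cancelling what they share leaves a common multiple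
of `q` and `r` which is still in `AP(S, p)`; so `lcm(q, r) ∈ AP(S, p)`. Put `q = gQ`, `r = gR` with
`Q`, `R` coprime. The semigroup `⟨Q, R⟩` is symmetric about `QR - Q - R`, hence `p ∉ ⟨Q, R⟩` would
give `QR - p ∈ ⟨Q, R⟩` and then `lcm(q, r) - p = (g - 1)p + g(QR - p) ∈ S`. Therefore
`p ∈ ⟨Q, R⟩`, and `S = ⟨p⟩ + g⟨Q, R⟩` is a gluing of symmetric semigroups, which is symmetric. So
in a non-symmetric `S` the elements of the Apéry sets have just one factorization.
-/

/-- Symmetry of a submonoid of `ℤ` under `z ↦ F - z`. For a numerical semigroup `F` is then the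
Frobenius number; allowing any submonoid and any `F` lets `ℕ` itself, with `F = -1`, start the
gluing construction. -/
def SymmetricAbout (M : AddSubmonoid ℤ) (F : ℤ) : Prop :=
  ∀ z : ℤ, z ∈ M ↔ F - z ∉ M

/-- The gluing `⟨p⟩ + gM` of `ℕ` and a submonoid `M` of `ℤ`, which builds `⟨p, gQ, gR⟩` from
`⟨Q, R⟩`. The usual conditions, `p ∈ M` and `p` coprime to `g`, are not part of the definition. -/
def glue (M : AddSubmonoid ℤ) (g p : ℤ) : AddSubmonoid ℤ :=
  AddSubmonoid.multiples p ⊔ M.map (AddMonoidHom.mulLeft g)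

lemma mem_glue {M : AddSubmonoid ℤ} {g p z : ℤ} :
    z ∈ glue M g p ↔ ∃ a : ℕ, ∃ m ∈ M, a * p + g * m = z := by
  simp [glue, AddSubmonoid.mem_sup, AddSubmonoid.mem_multiples_iff]

lemma closure_insert_image_mul (g p : ℤ) (s : Set ℤ) :
    AddSubmonoid.closure (insert p ((g * ·) '' s)) = glue (AddSubmonoid.closure s) g p := by
  rw [glue, AddSubmonoid.multiples_eq_closure, AddMonoidHom.map_mclosure,
    ← AddSubmonoid.closure_union, Set.insert_eq]
  rfl

lemma exists_eq_mul_add_mul {p g : ℤ} (hg : 0 < g) (hpg : IsCoprime p g) (z : ℤ) :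
    ∃ x t : ℤ, 0 ≤ x ∧ x < g ∧ z = x * p + g * t := by
  obtain ⟨u, v, huv⟩ := hpg
  refine ⟨z * u % g, z * v + z * u / g * p, Int.emod_nonneg _ hg.ne', Int.emod_lt_of_pos _ hg, ?_⟩
  linear_combination (-z) * huv - p * Int.emod_add_mul_ediv (z * u) g

lemma mul_add_mul_mem_glue_iff {M : AddSubmonoid ℤ} {g p x t : ℤ} (hp : p ∈ M)
    (hpg : IsCoprime p g) (hx : 0 ≤ x) (hxg : x < g) : x * p + g * t ∈ glue M g p ↔ t ∈ M := by
  lift x to ℕ using hx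
  refine ⟨fun h => ?_, fun ht => mem_glue.2 ⟨x, t, ht, rfl⟩⟩
  obtain ⟨a, m, hm, ham⟩ := mem_glue.1 h
  obtain ⟨k, hk⟩ : g ∣ a - x :=
    hpg.symm.dvd_of_dvd_mul_right ⟨t - m, by linear_combination ham⟩
  have hk0 : 0 ≤ k := by
    have hlt : g * (-1) < g * k := by omega
    exact lt_of_mul_lt_mul_left hlt (by omega)
  lift k to ℕ using hk0
  have ht : t = k • p + m := by
    rw [nsmul_eq_mul]
    refine mul_left_cancel₀ (show g ≠ 0 by omega) ?_
    linear_combination p * hk - ham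
  exact ht ▸ add_mem (nsmul_mem hp k) hm

theorem SymmetricAbout.glue {M : AddSubmonoid ℤ} {F g p : ℤ} (hM : SymmetricAbout M F)
    (hp : p ∈ M) (hg : 0 < g) (hpg : IsCoprime p g) :
    SymmetricAbout (glue M g p) (g * F + (g - 1) * p) := by
  intro z
  obtain ⟨x, t, hx, hxg, rfl⟩ := exists_eq_mul_add_mul hg hpg z
  have hreflect : g * F + (g - 1) * p - (x * p + g * t) = (g - 1 - x) * p + g * (F - t) := by ring
  rw [hreflect, mul_add_mul_mem_glue_iff hp hpg hx hxg,
    mul_add_mul_mem_glue_iff hp hpg (by omega) (by omega)]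
  exact hM t

lemma mem_closure_one_int {z : ℤ} : z ∈ AddSubmonoid.closure {(1 : ℤ)} ↔ 0 ≤ z := by
  rw [AddSubmonoid.mem_closure_singleton]
  exact ⟨by rintro ⟨k, rfl⟩; simp, fun hz => ⟨z.toNat, by simp [hz]⟩⟩

lemma symmetricAbout_closure_one : SymmetricAbout (AddSubmonoid.closure {(1 : ℤ)}) (-1) := by
  intro z
  rw [mem_closure_one_int, mem_closure_one_int]
  omega

/-- Sylvester's theorem, obtained by gluing `ℕ` with itself. -/
theorem symmetricAbout_closure_pair {Q R : ℤ} (hQ : 0 ≤ Q) (hR : 0 < R) (hQR : IsCoprime Q R) :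
    SymmetricAbout (AddSubmonoid.closure {Q, R}) (Q * R - Q - R) := by
  have hpair : AddSubmonoid.closure {Q, R} = glue (AddSubmonoid.closure {1}) R Q := by
    simp [← closure_insert_image_mul]
  have hglue := symmetricAbout_closure_one.glue (mem_closure_one_int.2 hQ) hR hQR
  rw [hpair]
  convert hglue using 1
  ring

lemma mul_sub_mem_closure_pair {Q R p : ℤ} (hQ : 0 ≤ Q) (hR : 0 < R) (hQR : IsCoprime Q R)
    (hp : p ∉ AddSubmonoid.closure {Q, R}) : Q * R - p ∈ AddSubmonoid.closure {Q, R} := by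
  have hreflect : Q * R - Q - R - p ∈ AddSubmonoid.closure {Q, R} := by
    by_contra h
    exact hp ((symmetricAbout_closure_pair hQ hR hQR p).2 h)
  have hsum : Q * R - p = Q + (R + (Q * R - Q - R - p)) := by ring
  rw [hsum]
  exact add_mem (AddSubmonoid.mem_closure_of_mem (by simp))
    (add_mem (AddSubmonoid.mem_closure_of_mem (by simp)) hreflect)

theorem exists_symmetricAbout_of_lcm_sub_notMem {p : ℤ} {q r : ℕ} (hq : 0 < q) (hr : 0 < r)
    (hcop : IsCoprime p (q.gcd r : ℤ))
    (hlcm : (q.lcm r : ℤ) - p ∉ AddSubmonoid.closure {p, (q : ℤ), (r : ℤ)}) :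
    ∃ F, SymmetricAbout (AddSubmonoid.closure {p, (q : ℤ), (r : ℤ)}) F := by
  have hgpos : 0 < q.gcd r := Nat.gcd_pos_of_pos_left r hq
  obtain ⟨Q, R, hQR, hqQ, hrR⟩ := Nat.exists_coprime q r
  set g := q.gcd r
  have hRpos : 0 < R := by
    rw [hrR] at hr
    exact Nat.pos_of_mul_pos_right hr
  have hlcm_eq : q.lcm r = g * (Q * R) := by
    rw [hqQ, hrR, Nat.lcm_mul_right, hQR.lcm_eq_mul, mul_comm]
  have hglue : AddSubmonoid.closure {p, (q : ℤ), (r : ℤ)} =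
      glue (AddSubmonoid.closure {(Q : ℤ), (R : ℤ)}) g p := by
    rw [← closure_insert_image_mul, Set.image_pair, hqQ, hrR]
    push_cast
    simp only [mul_comm]
  have hQR' : IsCoprime (Q : ℤ) R := hQR.isCoprime
  have hp : p ∈ AddSubmonoid.closure {(Q : ℤ), (R : ℤ)} := by
    by_contra hp
    refine hlcm (hglue ▸ mem_glue.2 ⟨g - 1, Q * R - p,
      mul_sub_mem_closure_pair (by positivity) (by positivity) hQR' hp, ?_⟩)
    rw [hlcm_eq]
    push_cast [Nat.one_le_iff_ne_zero.2 hgpos.ne']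
    ring
  have hsymm := symmetricAbout_closure_pair (by positivity) (by positivity) hQR'
  exact hglue ▸ ⟨_, hsymm.glue hp (by positivity) hcop⟩

theorem exists_symmetricAbout_of_mul_sub_notMem {p : ℤ} {q r α β : ℕ} (hq : 0 < q) (hr : 0 < r)
    (hcop : IsCoprime p (q.gcd r : ℤ)) (hα : 0 < α) (hαβ : α * q = β * r)
    (hmul : (α * q : ℤ) - p ∉ AddSubmonoid.closure {p, (q : ℤ), (r : ℤ)}) :
    ∃ F, SymmetricAbout (AddSubmonoid.closure {p, (q : ℤ), (r : ℤ)}) F := by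
  refine exists_symmetricAbout_of_lcm_sub_notMem hq hr hcop fun hlcm => hmul ?_
  have hdvd : q.lcm r ∣ α * q := Nat.lcm_dvd (dvd_mul_left q α) (hαβ ▸ dvd_mul_left r β)
  have hle : q.lcm r ≤ α * q := Nat.le_of_dvd (by positivity) hdvd
  obtain ⟨k, hk⟩ : q ∣ α * q - q.lcm r := Nat.dvd_sub (dvd_mul_left q α) (Nat.dvd_lcm_left q r)
  have hsum : (α * q : ℤ) - p = (q.lcm r - p) + k • (q : ℤ) := by
    rw [nsmul_eq_mul]
    zify [hle] at hk
    linear_combination hk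
  rw [hsum]
  exact add_mem hlcm (nsmul_mem (AddSubmonoid.mem_closure_of_mem (by simp)) k)

theorem eq_and_eq_of_mul_add_mul_sub_notMem {p : ℤ} {q r : ℕ} (hq : 0 < q) (hr : 0 < r)
    (hcop : IsCoprime p (q.gcd r : ℤ))
    (hns : ¬ ∃ F, SymmetricAbout (AddSubmonoid.closure {p, (q : ℤ), (r : ℤ)}) F) {b c b' c' : ℕ}
    (h : b * q + c * r = b' * q + c' * r)
    (hap : (b * q + c * r : ℤ) - p ∉ AddSubmonoid.closure {p, (q : ℤ), (r : ℤ)}) :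
    b = b' ∧ c = c' := by
  wlog hle : b' ≤ b generalizing b c b' c'
  · have hap' : (b' * q + c' * r : ℤ) - p ∉ AddSubmonoid.closure {p, (q : ℤ), (r : ℤ)} := by
      rwa [← show (b * q + c * r : ℤ) = b' * q + c' * r by exact_mod_cast h]
    exact (this h.symm hap' (by omega)).imp Eq.symm Eq.symm
  obtain ⟨α, rfl⟩ := Nat.exists_eq_add_of_le hle
  have hc : c ≤ c' := Nat.le_of_mul_le_mul_right (by linarith [Nat.zero_le (α * q)]) hr
  obtain ⟨β, rfl⟩ := Nat.exists_eq_add_of_le hc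
  have hαβ : α * q = β * r := by linarith
  have hα : α = 0 := by
    by_contra hα
    refine hns (exists_symmetricAbout_of_mul_sub_notMem hq hr hcop (by omega) hαβ fun hmul =>
      hap ?_)
    have hsum : (((b' + α : ℕ) : ℤ) * q + c * r) - p =
        (α * q - p) + (b' • (q : ℤ) + c • (r : ℤ)) := by
      push_cast [nsmul_eq_mul]
      ring
    rw [hsum]
    exact add_mem hmul (add_mem (nsmul_mem (AddSubmonoid.mem_closure_of_mem (by simp)) b')
      (nsmul_mem (AddSubmonoid.mem_closure_of_mem (by simp)) c))
  subst hα
  have hβ : β = 0 := by simpa [hr.ne', eq_comm] using hαβ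
  simp [hβ]

lemma memZ_iff_mem_closure_range {d : ℕ} {n : Fin d → ℕ} {z : ℤ} :
    memZ n z ↔ z ∈ AddSubmonoid.closure (Set.range fun i => (n i : ℤ)) := by
  simp [memZ, gen, sval, AddSubmonoid.mem_closure_range_iff_of_fintype, eq_comm]

lemma SymmetricAbout.isSymmetric {d : ℕ} {n : Fin d → ℕ} {F : ℤ}
    (h : SymmetricAbout (AddSubmonoid.closure (Set.range fun i => (n i : ℤ))) F) :
    IsSymmetric n := by
  have hsymm (z : ℤ) : memZ n z ↔ ¬ memZ n (F - z) := by
    simpa only [memZ_iff_mem_closure_range] using h z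
  have hzero : memZ n 0 := memZ_iff_mem_closure_range.2 (zero_mem _)
  refine ⟨F, by simpa using (hsymm 0).1 hzero, fun z hz => (hsymm z).2 ?_, hsymm⟩
  rintro ⟨x, -, hx⟩
  omega

lemma IsNumerical.eq_one_of_forall_dvd {d : ℕ} {n : Fin d → ℕ} (hnum : IsNumerical n) {g : ℕ}
    (hg : ∀ i, g ∣ n i) : g = 1 := by
  obtain ⟨B, hB⟩ := hnum.bddAbove
  have hdvd : ∀ x, B < x → g ∣ x := by
    intro x hx
    obtain ⟨a, rfl⟩ : x ∈ gen n := by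
      by_contra h
      exact (hB h).not_gt hx
    exact Finset.dvd_sum fun i _ => (hg i).mul_left (a i)
  exact Nat.dvd_one.1 ((Nat.dvd_add_right (hdvd (B + 1) (by omega))).1 (hdvd (B + 2) (by omega)))

lemma apply_eq_zero_of_sval_mem_Apery {d : ℕ} {n a : Fin d → ℕ} {i : Fin d}
    (ha : sval n a ∈ Apery n (n i)) : a i = 0 := by
  by_contra hi
  refine ha.2 ⟨sval n (a - Pi.single i 1), ⟨_, rfl⟩, ?_⟩
  have hsplit : a = Pi.single i 1 + (a - Pi.single i 1) := by
    refine (add_tsub_cancel_of_le fun j => ?_).symm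
    obtain rfl | hj := eq_or_ne j i
    · simpa using Nat.one_le_iff_ne_zero.2 hi
    · simp [hj]
  conv_lhs => rw [hsplit]
  simp [sval, add_mul, Finset.sum_add_distrib, Pi.single_apply]

lemma range_eq_triple_succAbove {α : Type*} (f : Fin 3 → α) (i : Fin 3) :
    Set.range f = {f i, f (i.succAbove 0), f (i.succAbove 1)} := by
  ext x
  simp [Fin.exists_iff_succAbove i, Fin.exists_fin_two, eq_comm]

theorem statement7_general {n : Fin 3 → ℕ} (hpos : ∀ i, 0 < n i) (hnum : IsNumerical n)
    (hns : ¬ IsSymmetric n) {i : Fin 3} {a b : Fin 3 → ℕ} (hab : sval n a = sval n b)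
    (ha : sval n a ∈ Apery n (n i)) : a = b := by
  have hai : a i = 0 := apply_eq_zero_of_sval_mem_Apery ha
  have hbi : b i = 0 := apply_eq_zero_of_sval_mem_Apery (hab ▸ ha)
  have hrange := range_eq_triple_succAbove (fun j => (n j : ℤ)) i
  have hcop : IsCoprime (n i : ℤ) ((n (i.succAbove 0)).gcd (n (i.succAbove 1))) := by
    refine Nat.Coprime.isCoprime (hnum.eq_one_of_forall_dvd ?_)
    simp [Fin.forall_iff_succAbove i, Fin.forall_fin_two, Nat.gcd_dvd_left,
      (Nat.gcd_dvd_right _ _).trans]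
  have hap : ((sval n a : ℕ) : ℤ) - n i ∉ AddSubmonoid.closure (Set.range fun j => (n j : ℤ)) := by
    rw [← memZ_iff_mem_closure_range]
    rintro ⟨y, hy, hya⟩
    exact ha.2 ⟨y, hy, by omega⟩
  simp only [sval, Fin.sum_univ_succAbove _ i, Fin.sum_univ_two, hai, hbi, zero_mul, zero_add]
    at hab hap
  have hcoeff := eq_and_eq_of_mul_add_mul_sub_notMem (hpos _) (hpos _) hcop
    (fun ⟨F, hF⟩ => hns (SymmetricAbout.isSymmetric (hrange ▸ hF))) hab
    (by simpa [hrange] using hap)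
  simpa [funext_iff, Fin.forall_iff_succAbove i, Fin.forall_fin_two, hai, hbi] using hcoeff

/-- a non-symmetric numerical semigroup of embedding dimension 3
has all its Apéry sets `AP(S,nᵢ)` homogeneous; in particular it is
homogeneous. -/
theorem statement7 (n : Fin 3 → ℕ) (hmono : StrictMono n) (hpos : 0 < n 0)
    (hnum : IsNumerical n) (hmin : MinGen n) (hnotsym : ¬ IsSymmetric n) :
    ∀ i : Fin 3, HomogSet n (Apery n (n i)) := by
  rintro i t ht - a b rfl hb
  have hpos' (j : Fin 3) : 0 < n j := hpos.trans_le (hmono.monotone (Fin.zero_le j))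
  rw [statement7_general hpos' hnum hnotsym hb.symm ht]
end
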